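/- arXiv:1902.03291 — 2 statements merged into one kernel-verified Lean document; each statement's English description precedes it below -/
import Mathlib

section
/- Let n ≥ 3 be an integer and let A = (a_{st}) be a symmetric n×n real matrix with zero diagonal (a_{ss} = 0 for all s). Then U-centering is idempotent on A: the U-centered version of Ã equals Ã, i.e. Ã̃ = Ã. -/
open Finset Matrix

/-- The `𝒰`-centered version `Ã` of an `n × n` real matrix `A`:
`ã_{st} = a_{st} − (1/(n−2))·Σ_v a_{sv} − (1/(n−2))·Σ_u a_{ut}
          + (1/((n−1)(n−2)))·Σ_{u,v} a_{uv}` for `s ≠ t`, and `ã_{ss} = 0`. -/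
noncomputable def uCenter {n : ℕ} (A : Matrix (Fin n) (Fin n) ℝ) :
    Matrix (Fin n) (Fin n) ℝ := fun s t =>
  if s = t then 0 else
    A s t - (∑ v, A s v) / ((n : ℝ) - 2) - (∑ u, A u t) / ((n : ℝ) - 2)
      + (∑ u, ∑ v, A u v) / (((n : ℝ) - 1) * ((n : ℝ) - 2))

/-- The rows of a `𝒰`-centered matrix sum to zero. -/
theorem uCenter_row_sum (n : ℕ) (hn : 3 ≤ n)
    (A : Matrix (Fin n) (Fin n) ℝ) (hsymm : Aᵀ = A) (hdiag : ∀ s, A s s = 0) (s : Fin n) :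
    ∑ t, uCenter A s t = 0 := by
  have hn' : (3 : ℝ) ≤ n := by exact_mod_cast hn
  have h1 : (n : ℝ) - 1 ≠ 0 := by linarith
  have h2 : (n : ℝ) - 2 ≠ 0 := by linarith
  have hA : ∀ u v, A u v = A v u := fun u v => congrFun (congrFun hsymm.symm u) v
  have hcol : ∑ u, A u s = ∑ v, A s v := Finset.sum_congr rfl fun u _ => hA u s
  have hT : ∑ t, ∑ u, A u t = ∑ u, ∑ v, A u v := Finset.sum_comm
  have key : ∀ t, uCenter A s t =
      (A s t - (∑ v, A s v) / ((n : ℝ) - 2) - (∑ u, A u t) / ((n : ℝ) - 2)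
        + (∑ u, ∑ v, A u v) / (((n : ℝ) - 1) * ((n : ℝ) - 2)))
      - (if s = t then (-(∑ v, A s v) / ((n : ℝ) - 2) - (∑ v, A s v) / ((n : ℝ) - 2)
        + (∑ u, ∑ v, A u v) / (((n : ℝ) - 1) * ((n : ℝ) - 2))) else 0) := by
    intro t
    unfold uCenter
    by_cases h : s = t
    · subst h
      rw [if_pos rfl, if_pos rfl, hdiag, hcol]
      ring
    · rw [if_neg h, if_neg h]
      ring
  rw [Finset.sum_congr rfl fun t _ => key t]
  rw [Finset.sum_sub_distrib, Finset.sum_add_distrib, Finset.sum_sub_distrib,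
    Finset.sum_sub_distrib, Finset.sum_ite_eq, if_pos (Finset.mem_univ s),
    ← Finset.sum_div, ← Finset.sum_div, hT]
  simp only [Finset.sum_const, Finset.card_univ, Fintype.card_fin, nsmul_eq_mul]
  generalize ∑ v, A s v = r
  generalize ∑ u, ∑ v, A u v = T
  field_simp
  ring

/-- Let `n ≥ 3` and let `A` be a symmetric `n × n` real matrix with zero
diagonal. Then `𝒰`-centering is idempotent on `A`: `Ã̃ = Ã`. -/
theorem uCenter_idempotent (n : ℕ) (hn : 3 ≤ n)
    (A : Matrix (Fin n) (Fin n) ℝ) (hsymm : Aᵀ = A) (hdiag : ∀ s, A s s = 0) :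
    uCenter (uCenter A) = uCenter A := by
  have hA : ∀ u v, A u v = A v u := fun u v => congrFun (congrFun hsymm.symm u) v
  have hrow := uCenter_row_sum n hn A hsymm hdiag
  have hsym : ∀ s t, uCenter A s t = uCenter A t s := by
    intro s t
    have hc : ∀ x, ∑ u, A u x = ∑ v, A x v := fun x => Finset.sum_congr rfl fun u _ => hA u x
    unfold uCenter
    by_cases h : s = t
    · rw [if_pos h, if_pos h.symm]
    · rw [if_neg h, if_neg (Ne.symm h), hc, hc, hA s t]
      ring
  have hcol : ∀ t, ∑ u, uCenter A u t = 0 := fun t => by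
    rw [← hrow t]
    exact Finset.sum_congr rfl fun u _ => hsym u t
  funext s t
  by_cases h : s = t
  · simp [uCenter, h]
  · rw [uCenter, if_neg h, hcol, hrow, Finset.sum_congr rfl fun u _ => hrow u]
    simp
end

section
/- Let S and T be measurable spaces and let (X,Y) and (X′,Y′) be independent identically distributed random pairs taking values in S×T. Let k : S×S → ℝ be measurable with E[|k(X,X′)|] < ∞, and let h_k be the corresponding doubly centered kernel. Then the conditional expectation of h_k(X,X′) given the σ-algebra generated by (X,Y) vanishes almost surely: E[h_k(X,X′) | σ(X,Y)] = 0 a.s. -/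
open MeasureTheory ProbabilityTheory

/-- Let `(X,Y)` and `(X′,Y′)` be i.i.d. random pairs in `S × T`, `k` a
measurable kernel with `E[|k(X,X′)|] < ∞` and `hk` the corresponding doubly centered kernel.
Then `E[hk(X,X′) | σ(X,Y)] = 0` almost surely. -/
theorem condexp_doublyCentered_eq_zero
    {Ω S T : Type*} [MeasurableSpace Ω] [MeasurableSpace S] [MeasurableSpace T]
    (μ : Measure Ω) [IsProbabilityMeasure μ]
    (X X' : Ω → S) (Y Y' : Ω → T)
    (hmeas : Measurable (fun ω => (X ω, Y ω)))
    (hmeas' : Measurable (fun ω => (X' ω, Y' ω)))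
    (hindep : IndepFun (fun ω => (X ω, Y ω)) (fun ω => (X' ω, Y' ω)) μ)
    (hident : Measure.map (fun ω => (X ω, Y ω)) μ =
      Measure.map (fun ω => (X' ω, Y' ω)) μ)
    (k : S → S → ℝ)
    (hkmeas : Measurable fun p : S × S => k p.1 p.2)
    (hkint : Integrable (fun ω => k (X ω) (X' ω)) μ)
    (hk : S → S → ℝ)
    (hhk : ∀ a b, hk a b = k a b - (∫ ω, k a (X' ω) ∂μ) - (∫ ω, k (X ω) b ∂μ)
      + ∫ ω, k (X ω) (X' ω) ∂μ) :
    μ[(fun ω => hk (X ω) (X' ω)) |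
        MeasurableSpace.comap (fun ω => (X ω, Y ω)) inferInstance] =ᵐ[μ] 0 := by
  classical
  set Z : Ω → S × T := fun ω => (X ω, Y ω) with hZ
  set Z' : Ω → S × T := fun ω => (X' ω, Y' ω) with hZ'
  set ν : Measure (S × T) := Measure.map Z μ with hν
  have : IsProbabilityMeasure ν := Measure.isProbabilityMeasure_map hmeas.aemeasurable
  have hjoint : Measure.map (fun ω => (Z ω, Z' ω)) μ = ν.prod ν := by
    rw [(indepFun_iff_map_prod_eq_prod_map_map hmeas.aemeasurable hmeas'.aemeasurable).1 hindep,
      ← hident]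
  have hpm : Measurable (fun ω => (Z ω, Z' ω)) := hmeas.prodMk hmeas'
  have hKm : Measurable (fun q : (S × T) × (S × T) => k q.1.1 q.2.1) :=
    hkmeas.comp ((measurable_fst.comp measurable_fst).prodMk
      (measurable_fst.comp measurable_snd))
  have hKint : Integrable (fun q : (S × T) × (S × T) => k q.1.1 q.2.1) (ν.prod ν) := by
    rw [← hjoint, integrable_map_measure hKm.aestronglyMeasurable hpm.aemeasurable]
    exact hkint
  have hG : ∀ a, ∫ ω, k a (X' ω) ∂μ = ∫ z, k a z.1 ∂ν := by
    intro a
    have hm : Measurable (fun z : S × T => k a z.1) :=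
      hkmeas.comp (measurable_const.prodMk measurable_fst)
    rw [hident, integral_map hmeas'.aemeasurable hm.aestronglyMeasurable]
  have hH : ∀ b, ∫ ω, k (X ω) b ∂μ = ∫ z, k z.1 b ∂ν := by
    intro b
    have hm : Measurable (fun z : S × T => k z.1 b) :=
      hkmeas.comp (measurable_fst.prodMk measurable_const)
    rw [hν, integral_map hmeas.aemeasurable hm.aestronglyMeasurable]
  have hc : ∫ ω, k (X ω) (X' ω) ∂μ = ∫ q, k q.1.1 q.2.1 ∂(ν.prod ν) := by
    rw [← hjoint, integral_map hpm.aemeasurable hKm.aestronglyMeasurable]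
  set c : ℝ := ∫ ω, k (X ω) (X' ω) ∂μ with hcdef
  have hGint : Integrable (fun z : S × T => ∫ z', k z.1 z'.1 ∂ν) ν := hKint.integral_prod_left
  have hHint : Integrable (fun z' : S × T => ∫ z, k z.1 z'.1 ∂ν) ν := hKint.integral_prod_right
  have hHc : ∫ z', ∫ z, k z.1 z'.1 ∂ν ∂ν = c := by
    rw [hc, integral_prod_symm _ hKint]
  have hFeq : (fun q : (S × T) × (S × T) => hk q.1.1 q.2.1) = fun q =>
      k q.1.1 q.2.1 - (∫ z', k q.1.1 z'.1 ∂ν) - (∫ z, k z.1 q.2.1 ∂ν) + c := by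
    funext q
    rw [hhk, hG, hH]
  have hFint : Integrable (fun q : (S × T) × (S × T) => hk q.1.1 q.2.1) (ν.prod ν) := by
    rw [hFeq]
    exact ((hKint.sub (hGint.comp_fst ν)).sub (hHint.comp_snd ν)).add (integrable_const c)
  have hinner : ∀ᵐ z ∂ν, ∫ z', hk z.1 z'.1 ∂ν = 0 := by
    filter_upwards [hKint.prod_right_ae] with z hz
    have h1 : (fun z' : S × T => hk z.1 z'.1) = fun z' =>
        k z.1 z'.1 - (∫ w, k z.1 w.1 ∂ν) - (∫ w, k w.1 z'.1 ∂ν) + c := by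
      funext z'
      rw [hhk, hG, hH]
    have hz1 : Integrable (fun z' : S × T => k z.1 z'.1 - (∫ w, k z.1 w.1 ∂ν)) ν :=
      hz.sub (integrable_const _)
    have hz2 : Integrable (fun z' : S × T => k z.1 z'.1 - (∫ w, k z.1 w.1 ∂ν)
        - (∫ w, k w.1 z'.1 ∂ν)) ν := hz1.sub hHint
    rw [h1, integral_add hz2 (integrable_const _), integral_sub hz1 hHint,
      integral_sub hz (integrable_const _), hHc]
    simp
  have hfint : Integrable (fun ω => hk (X ω) (X' ω)) μ := by
    have h := hFint
    rw [← hjoint] at h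
    exact h.comp_measurable hpm
  symm
  refine ae_eq_condExp_of_forall_setIntegral_eq hmeas.comap_le hfint ?_ ?_ ?_
  · intro s _ _
    exact integrable_zero _ _ _
  · rintro s ⟨A, hA, rfl⟩ _
    have hpre : Z ⁻¹' A = (fun ω => (Z ω, Z' ω)) ⁻¹' (A ×ˢ Set.univ) := by
      ext ω; simp
    have h2 : ∫ ω in Z ⁻¹' A, hk (X ω) (X' ω) ∂μ
        = ∫ q in A ×ˢ Set.univ, hk q.1.1 q.2.1 ∂(ν.prod ν) := by
      rw [hpre, ← hjoint, setIntegral_map (hA.prod MeasurableSet.univ)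
        (by rw [hjoint]; exact hFint.aestronglyMeasurable) hpm.aemeasurable]
    rw [h2, setIntegral_prod _ hFint.integrableOn]
    simp only [Measure.restrict_univ]
    rw [integral_congr_ae (ae_restrict_of_ae hinner)]
    simp
  · exact aestronglyMeasurable_zero
end
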